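/- Let X be a nonempty countable extended metric space with bounded geometry, and let R > 0 be such that for every r < ∞ there exists n ∈ ℕ such that any two points x, y ∈ X with d(x,y) ≤ r are joined by a chain x = x₀, x₁, …, x_k = y with k ≤ n and d(x_{i−1}, x_i) ≤ R for each i. Let E = {(x,y) ∈ X × X : x ≠ y and d(x,y) ≤ R}, and let Δ be the bounded linear operator on ℓ²(X; ℂ) given by (Δξ)(x) = |{y : (x,y) ∈ E}|·ξ(x) − Σ_{y : (x,y) ∈ E} ξ(y). Then 0 belongs to the spectrum of Δ if and only if X is amenable. -/

import Mathlib

/-!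
The Laplacian satisfies Green's formula `2 re ⟪Δ ξ, ξ⟫ = D(ξ)`, where
`D(ξ) = ∑_{(x, y) ∈ E} |ξ x - ξ y|²` is the Dirichlet energy (`energy_eq_inner`). Both implications
compare `D` with the variations `∑_{x ∈ A} |ξ (t x) - ξ x|²` along partial translations `t`.

* If `X` is not amenable, there are `ε` and finitely many partial translations such that every unit
  vector varies by at least `ε` along one of them. Since `R` generates the metric coarsely, the
  displacement of a partial translation is covered by chains of boundedly many edges, so its
  variation is at most a constant times `D` (`tsum_translation_le`, `exists_translation_bound`).
  Hence `re ⟪Δ ξ, ξ⟫ ≥ c ‖ξ‖²` with `c > 0`, and a coercive operator is invertible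
  (`amenable_of_not_isUnit`).
* Conversely, by bounded geometry `E` is a union of finitely many graphs of partial translations
  (`exists_partial_injections`), so amenability gives unit vectors of arbitrarily small energy.
  Cauchy-Schwarz gives `‖Δ ξ‖² ≤ M D(ξ)` (`enorm_sq_le_energy`), so `Δ` is not bounded below and
  cannot be invertible (`not_isUnit_of_amenable`).

Sums of squares are taken in `ℝ≥0∞`, where they may be interchanged freely.
-/

open scoped ENNReal

/-- A partial translation of an extended metric space `X`. -/
def IsPartialTranslation {X : Type*} [EMetricSpace X] (t : X → X) (A B : Set X) : Prop :=
  Set.BijOn t A B ∧ ∃ C : ℝ≥0∞, C < ⊤ ∧ ∀ x ∈ A, edist (t x) x ≤ C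

/-- `X` is amenable: for each `ε > 0` and finite family of partial translations there is
a unit vector in `ℓ²(X; ℂ)` that is `ε`-almost invariant. -/
def IsAmenableSpace (X : Type*) [EMetricSpace X] : Prop :=
  ∀ ε : ℝ, 0 < ε → ∀ (m : ℕ) (t : Fin m → X → X) (A B : Fin m → Set X),
    (∀ i, IsPartialTranslation (t i) (A i) (B i)) →
    ∃ ξ : lp (fun _ : X => ℂ) 2, ‖ξ‖ = 1 ∧
      ∀ i, (∑' x : (A i), ‖ξ (t i x) - ξ (x : X)‖ ^ 2) < ε

/-! ### Summation over locally finite relations -/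

/-- Interchange of summation over a symmetric, locally finite relation `y ∈ N x`. -/
lemma tsum_sum_swap {X : Type*} (N : X → Finset X) (hsymm : ∀ x y, y ∈ N x ↔ x ∈ N y)
    (f : X → X → ℝ≥0∞) :
    ∑' x, ∑ y ∈ N x, f x y = ∑' y, ∑ x ∈ N y, f x y := by
  classical
  have h1 : ∀ (s : Finset X) (g : X → ℝ≥0∞),
      ∑ y ∈ s, g y = ∑' y, if y ∈ s then g y else 0 := by
    intro s g
    rw [tsum_eq_sum (s := s) (fun b hb => if_neg hb)]
    exact Finset.sum_congr rfl fun y hy => (if_pos hy).symm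
  simp_rw [h1]
  rw [ENNReal.tsum_comm]
  refine tsum_congr fun y => tsum_congr fun x => ?_
  simp only [hsymm x y]

lemma tsum_sum_le {X : Type*} (N : X → Finset X) (hsymm : ∀ x y, y ∈ N x ↔ x ∈ N y)
    (M : ℕ) (hM : ∀ x, (N x).card ≤ M) (e : X → ℝ≥0∞) :
    ∑' x, ∑ y ∈ N x, e y ≤ M * ∑' y, e y := by
  rw [tsum_sum_swap N hsymm (fun _ y => e y), ← ENNReal.tsum_mul_left]
  refine ENNReal.tsum_le_tsum fun y => ?_
  rw [Finset.sum_const, nsmul_eq_mul]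
  gcongr
  exact hM y

lemma enorm_sum_sq_le {ι : Type*} (s : Finset ι) (a : ι → ℂ) :
    ‖∑ i ∈ s, a i‖ₑ ^ 2 ≤ s.card * ∑ i ∈ s, ‖a i‖ₑ ^ 2 := by
  have h : ‖∑ i ∈ s, a i‖₊ ^ 2 ≤ s.card * ∑ i ∈ s, ‖a i‖₊ ^ 2 :=
    (pow_le_pow_left₀ (zero_le) (nnnorm_sum_le s a) 2).trans
      (sq_sum_le_card_mul_sum_sq (s := s) (f := fun i => ‖a i‖₊))
  simp only [enorm_eq_nnnorm]
  exact_mod_cast h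

/-! ### Energy and partial translations -/

/-- The Dirichlet energy of `ξ` for the graph with neighbourhoods `N x`; each edge is counted
in both directions. -/
noncomputable def energy {X : Type*} (N : X → Finset X) (ξ : X → ℂ) : ℝ≥0∞ :=
  ∑' x, ∑ y ∈ N x, ‖ξ x - ξ y‖ₑ ^ 2

/-- The variation of `ξ` along any map of bounded displacement is controlled by the energy: the
displacement is realised by a chain of at most `n` edges, every vertex of which lies in the ball
`Bl x`, and these balls have bounded multiplicity. -/
lemma tsum_translation_le {X : Type*} (N Bl : X → Finset X)
    (hsymm : ∀ x y, y ∈ Bl x ↔ x ∈ Bl y)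
    (M n : ℕ) (hM : ∀ x, (Bl x).card ≤ M) (ξ : X → ℂ) (t : X → X) (A : Set X)
    (hchain : ∀ x ∈ A, ∃ (k : ℕ) (c : ℕ → X), k ≤ n ∧ c 0 = x ∧ c k = t x ∧
      (∀ i < k, c i ∈ Bl x) ∧ ∀ i < k, c i = c (i + 1) ∨ c (i + 1) ∈ N (c i)) :
    ∑' x : A, ‖ξ (t x) - ξ x‖ₑ ^ 2 ≤ (n * n * M : ℕ) * energy N ξ := by
  set e : X → ℝ≥0∞ := fun z => ∑ y ∈ N z, ‖ξ z - ξ y‖ₑ ^ 2 with he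
  have key : ∀ x : A, ‖ξ (t x) - ξ x‖ₑ ^ 2 ≤ (n * n : ℕ) * ∑ z ∈ Bl x, e z := by
    rintro ⟨x, hx⟩
    obtain ⟨k, c, hk, h0, hck, hB, hE⟩ := hchain x hx
    have hstep : ∀ i ∈ Finset.range k,
        ‖ξ (c (i + 1)) - ξ (c i)‖ₑ ^ 2 ≤ ∑ z ∈ Bl x, e z := by
      intro i hi
      have hi := Finset.mem_range.1 hi
      rcases hE i hi with h | h
      · simp [h]
      · calc ‖ξ (c (i + 1)) - ξ (c i)‖ₑ ^ 2 = ‖ξ (c i) - ξ (c (i + 1))‖ₑ ^ 2 := by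
              rw [enorm_sub_rev]
          _ ≤ e (c i) := Finset.single_le_sum
              (f := fun y => ‖ξ (c i) - ξ y‖ₑ ^ 2) (fun _ _ => zero_le) h
          _ ≤ _ := Finset.single_le_sum (f := e) (fun _ _ => zero_le) (hB i hi)
    calc ‖ξ (t x) - ξ x‖ₑ ^ 2
        = ‖∑ i ∈ Finset.range k, (ξ (c (i + 1)) - ξ (c i))‖ₑ ^ 2 := by
          rw [Finset.sum_range_sub (fun i => ξ (c i)), hck, h0]
      _ ≤ k * ∑ i ∈ Finset.range k, ‖ξ (c (i + 1)) - ξ (c i)‖ₑ ^ 2 := by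
          simpa using enorm_sum_sq_le (Finset.range k) (fun i => ξ (c (i + 1)) - ξ (c i))
      _ ≤ k * (k * ∑ z ∈ Bl x, e z) := by
          gcongr
          refine (Finset.sum_le_sum hstep).trans ?_
          simp
      _ ≤ n * (n * ∑ z ∈ Bl x, e z) := by gcongr
      _ = _ := by push_cast; ring
  calc ∑' x : A, ‖ξ (t x) - ξ x‖ₑ ^ 2
      ≤ ∑' x : A, (n * n : ℕ) * ∑ z ∈ Bl x, e z := ENNReal.tsum_le_tsum key
    _ ≤ ∑' x, (n * n : ℕ) * ∑ z ∈ Bl x, e z :=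
        ENNReal.tsum_comp_le_tsum_of_injective Subtype.val_injective
          (fun x => (n * n : ℕ) * ∑ z ∈ Bl x, e z)
    _ = (n * n : ℕ) * ∑' x, ∑ z ∈ Bl x, e z := ENNReal.tsum_mul_left
    _ ≤ (n * n : ℕ) * (M * ∑' z, e z) := by
        gcongr
        exact tsum_sum_le Bl hsymm M hM e
    _ = _ := by
        rw [energy]
        push_cast
        ring

/-- A symmetric graph of degree at most `M` is covered by `M * M` graphs of partial injections:
number the neighbours of every vertex, and sort the edges `(x, y)` by the number of `y` among the
neighbours of `x` together with the number of `x` among the neighbours of `y`. -/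
lemma exists_partial_injections {X : Type*} (N : X → Finset X)
    (hsymm : ∀ x y, y ∈ N x ↔ x ∈ N y) (M : ℕ) (hM : ∀ x, (N x).card ≤ M) :
    ∃ (t : Fin (M * M) → X → X) (A : Fin (M * M) → Set X),
      (∀ i, Set.InjOn (t i) (A i)) ∧ (∀ i, ∀ x ∈ A i, t i x ∈ N x) ∧
      ∀ x, ∀ y ∈ N x, ∃ i, x ∈ A i ∧ t i x = y := by
  classical
  have hidx : ∀ x, ∃ f : N x → Fin M, Function.Injective f := fun x =>
    ⟨fun y => Fin.castLE (hM x) ((N x).equivFin y),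
      (Fin.castLE_injective (hM x)).comp (N x).equivFin.injective⟩
  choose f hf using hidx
  let P : Fin M × Fin M → X → X → Prop := fun p x y =>
    ∃ (h : y ∈ N x) (h' : x ∈ N y), f x ⟨y, h⟩ = p.1 ∧ f y ⟨x, h'⟩ = p.2
  let T : Fin M × Fin M → X → X := fun p x => if h : ∃ y, P p x y then h.choose else x
  have hT : ∀ p x, (∃ y, P p x y) → P p x (T p x) := by
    intro p x h
    simp only [T, dif_pos h]
    exact h.choose_spec
  refine ⟨fun i => T (finProdFinEquiv.symm i), fun i => {x | ∃ y, P (finProdFinEquiv.symm i) x y},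
    ?_, ?_, ?_⟩
  · intro i x hx x' hx' hxx
    obtain ⟨h1, h1', -, h2⟩ := hT _ x hx
    obtain ⟨h3, h3', -, h4⟩ := hT _ x' hx'
    dsimp only at hxx
    have : ∀ z (hz : z = T (finProdFinEquiv.symm i) x) (hz' : x' ∈ N z),
        f z ⟨x', hz'⟩ = (finProdFinEquiv.symm i).2 → x = x' := by
      rintro z rfl hz' h
      have := hf _ (h2.trans h.symm)
      simpa using this
    exact this _ hxx.symm h3' h4
  · intro i x hx
    exact (hT _ x hx).1
  · intro x y hy
    have hP : P (f x ⟨y, hy⟩, f y ⟨x, (hsymm x y).1 hy⟩) x y :=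
      ⟨hy, (hsymm x y).1 hy, rfl, rfl⟩
    refine ⟨finProdFinEquiv (f x ⟨y, hy⟩, f y ⟨x, (hsymm x y).1 hy⟩), ?_, ?_⟩
    · simp only [Equiv.symm_apply_apply]
      exact ⟨y, hP⟩
    · simp only [Equiv.symm_apply_apply]
      obtain ⟨h, -, h1, -⟩ := hT _ x ⟨y, hP⟩
      have := hf x h1
      simpa using this

lemma energy_le_sum {X : Type*} (N : X → Finset X) {m : ℕ} (t : Fin m → X → X)
    (A : Fin m → Set X) (hcov : ∀ x, ∀ y ∈ N x, ∃ i, x ∈ A i ∧ t i x = y) (ξ : X → ℂ) :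
    energy N ξ ≤ ∑ i, ∑' x : A i, ‖ξ (t i x) - ξ x‖ₑ ^ 2 := by
  classical
  have h : ∀ i, ∑' x : A i, ‖ξ (t i x) - ξ x‖ₑ ^ 2
      = ∑' x, if x ∈ A i then ‖ξ (t i x) - ξ x‖ₑ ^ 2 else 0 := by
    intro i
    rw [tsum_subtype (A i) (fun x => ‖ξ (t i x) - ξ x‖ₑ ^ 2)]
    rfl
  simp_rw [h]
  rw [← Summable.tsum_finsetSum (fun _ _ => ENNReal.summable)]
  refine ENNReal.tsum_le_tsum fun x => ?_
  rcases (N x).eq_empty_or_nonempty with h0 | ⟨y₀, hy₀⟩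
  · simp [h0]
  have : Nonempty (Fin m) := ⟨(hcov x y₀ hy₀).choose⟩
  choose! j hj using hcov x
  have hinj : Set.InjOn j (N x) := fun y hy y' hy' hyy => by
    rw [← (hj y hy).2, hyy, (hj y' hy').2]
  calc ∑ y ∈ N x, ‖ξ x - ξ y‖ₑ ^ 2
      = ∑ y ∈ N x, if x ∈ A (j y) then ‖ξ (t (j y) x) - ξ x‖ₑ ^ 2 else 0 := by
        refine Finset.sum_congr rfl fun y hy => ?_
        rw [if_pos (hj y hy).1, (hj y hy).2, enorm_sub_rev]
    _ = ∑ i ∈ (N x).image j, if x ∈ A i then ‖ξ (t i x) - ξ x‖ₑ ^ 2 else 0 := by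
        rw [Finset.sum_image hinj]
    _ ≤ _ := Finset.sum_le_sum_of_subset (Finset.subset_univ _)

/-! ### The Laplacian and the energy -/

lemma lp_tsum_enorm_sq {X : Type*} (ξ : lp (fun _ : X => ℂ) 2) :
    ∑' x, ‖ξ x‖ₑ ^ 2 = ‖ξ‖ₑ ^ 2 := by
  have h := lp.hasSum_norm (p := 2) (by norm_num) ξ
  simp only [ENNReal.toReal_ofNat, Real.rpow_ofNat] at h
  have h2 : ∀ x, ‖ξ x‖ₑ ^ 2 = ENNReal.ofReal (‖ξ x‖ ^ 2) := fun x => by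
    rw [ENNReal.ofReal_pow (norm_nonneg _), ofReal_norm]
  simp_rw [h2]
  rw [← ENNReal.ofReal_tsum_of_nonneg (fun _ => by positivity) h.summable, h.tsum_eq,
    ENNReal.ofReal_pow (norm_nonneg _), ofReal_norm]

lemma enorm_sub_sq_le (a b : ℂ) : ‖a - b‖ₑ ^ 2 ≤ 2 * (‖a‖ₑ ^ 2 + ‖b‖ₑ ^ 2) := by
  have h : ‖a - b‖₊ ^ 2 ≤ 2 * (‖a‖₊ ^ 2 + ‖b‖₊ ^ 2) :=
    (pow_le_pow_left₀ (zero_le) (nnnorm_sub_le a b) 2).trans add_sq_le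
  simp only [enorm_eq_nnnorm]
  exact_mod_cast h

/-- Green's formula: the energy of `ξ` is finite and equals `2 re ⟪Δ ξ, ξ⟫`. -/
lemma energy_eq_inner {X : Type*} (N : X → Finset X) (hsymm : ∀ x y, y ∈ N x ↔ x ∈ N y)
    (M : ℕ) (hM : ∀ x, (N x).card ≤ M)
    (Δ : lp (fun _ : X => ℂ) 2 →L[ℂ] lp (fun _ : X => ℂ) 2)
    (hΔ : ∀ (ξ : lp (fun _ : X => ℂ) 2) (x : X), Δ ξ x = ∑ y ∈ N x, (ξ x - ξ y))
    (ξ : lp (fun _ : X => ℂ) 2) :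
    energy N ξ ≠ ∞ ∧ (energy N ξ).toReal = 2 * (inner ℂ (Δ ξ) ξ).re := by
  set a : X → ℝ≥0∞ := fun x => ∑ y ∈ N x, ‖ξ x - ξ y‖ₑ ^ 2 with ha
  set b : X → ℝ≥0∞ := fun x => ∑ _y ∈ N x, ‖ξ x‖ₑ ^ 2 with hb
  set c : X → ℝ≥0∞ := fun x => ∑ y ∈ N x, ‖ξ y‖ₑ ^ 2 with hc
  have hbc : ∑' x, b x = ∑' x, c x := tsum_sum_swap N hsymm (fun x _ => ‖ξ x‖ₑ ^ 2)
  have hcfin : ∑' x, c x ≠ ∞ := by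
    refine ne_top_of_le_ne_top ?_ (tsum_sum_le N hsymm M hM (fun y => ‖ξ y‖ₑ ^ 2))
    rw [lp_tsum_enorm_sq]
    exact ENNReal.mul_ne_top (ENNReal.natCast_ne_top M) (ENNReal.pow_ne_top enorm_ne_top)
  have hbfin : ∑' x, b x ≠ ∞ := hbc ▸ hcfin
  have hafin : ∑' x, a x ≠ ∞ := by
    have : ∑' x, a x ≤ 2 * (∑' x, b x + ∑' x, c x) := by
      rw [← ENNReal.tsum_add, ← ENNReal.tsum_mul_left]
      refine ENNReal.tsum_le_tsum fun x => ?_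
      simp only [ha, hb, hc]
      rw [← Finset.sum_add_distrib, Finset.mul_sum]
      exact Finset.sum_le_sum fun y _ => enorm_sub_sq_le _ _
    exact ne_top_of_le_ne_top
      (ENNReal.mul_ne_top (by norm_num) (ENNReal.add_ne_top.2 ⟨hbfin, hcfin⟩)) this
  refine ⟨hafin, ?_⟩
  have hasum := ENNReal.hasSum_toReal hafin
  have hbsum := ENNReal.hasSum_toReal hbfin
  have hcsum := ENNReal.hasSum_toReal hcfin
  have hsum := (hasum.add hbsum).sub hcsum
  have hinner := (Complex.hasSum_re (lp.hasSum_inner (Δ ξ) ξ)).mul_left 2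
  -- `2 re (conj (u - v) * u) = |u - v|² + |u|² - |v|²`, and the last two terms cancel after
  -- summation over the symmetric edge set.
  have hpt : ∀ x, 2 * (inner ℂ (Δ ξ x) (ξ x)).re
      = (a x).toReal + (b x).toReal - (c x).toReal := by
    intro x
    have hr : ∀ g : X → ℂ, (∑ y ∈ N x, ‖g y‖ₑ ^ 2).toReal = ∑ y ∈ N x, ‖g y‖ ^ 2 := by
      intro g
      rw [ENNReal.toReal_sum (fun y _ => ENNReal.pow_ne_top enorm_ne_top)]
      simp
    simp only [ha, hb, hc]
    rw [hr (fun y => ξ x - ξ y), hr (fun _ => ξ x), hr (fun y => ξ y), hΔ, sum_inner,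
      Complex.re_sum, Finset.mul_sum, ← Finset.sum_add_distrib, ← Finset.sum_sub_distrib]
    refine Finset.sum_congr rfl fun y _ => ?_
    simp only [Complex.sq_norm, Complex.normSq_apply, RCLike.inner_apply, Complex.sub_re,
      Complex.sub_im, Complex.mul_re, Complex.conj_re, Complex.conj_im, map_sub]
    ring
  simp_rw [hpt] at hinner
  have hfinite : ∀ {f : X → ℝ≥0∞}, ∑' x, f x ≠ ∞ →
      (∑' x, f x).toReal = ∑' x, (f x).toReal :=
    fun hf => ENNReal.tsum_toReal_eq (ENNReal.ne_top_of_tsum_ne_top hf)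
  rw [hinner.unique hsum, ← hfinite hafin, ← hfinite hbfin, ← hfinite hcfin, hbc,
    add_sub_cancel_right, energy]

/-- Pointwise Cauchy-Schwarz bounds `‖Δ ξ‖²` by a multiple of the energy. -/
lemma enorm_sq_le_energy {X : Type*} (N : X → Finset X) (M : ℕ) (hM : ∀ x, (N x).card ≤ M)
    (Δ : lp (fun _ : X => ℂ) 2 →L[ℂ] lp (fun _ : X => ℂ) 2)
    (hΔ : ∀ (ξ : lp (fun _ : X => ℂ) 2) (x : X), Δ ξ x = ∑ y ∈ N x, (ξ x - ξ y))
    (ξ : lp (fun _ : X => ℂ) 2) :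
    ‖Δ ξ‖ₑ ^ 2 ≤ M * energy N ξ := by
  rw [← lp_tsum_enorm_sq, energy, ← ENNReal.tsum_mul_left]
  refine ENNReal.tsum_le_tsum fun x => ?_
  rw [hΔ]
  refine (enorm_sum_sq_le _ _).trans ?_
  gcongr
  exact hM x

/-! ### Amenability and invertibility -/

lemma tsum_norm_eq_toReal {X : Type*} (A : Set X) (t : X → X) (ξ : X → ℂ) :
    ∑' x : A, ‖ξ (t x) - ξ (x : X)‖ ^ 2 = (∑' x : A, ‖ξ (t x) - ξ x‖ₑ ^ 2).toReal := by
  rw [ENNReal.tsum_toReal_eq (fun _ => ENNReal.pow_ne_top enorm_ne_top)]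
  simp

lemma chain_edist_le {X : Type*} [EMetricSpace X] (R : ℝ≥0∞) (k : ℕ) (c : ℕ → X)
    (h : ∀ i < k, edist (c i) (c (i + 1)) ≤ R) : ∀ i ≤ k, edist (c 0) (c i) ≤ i * R := by
  intro i
  induction i with
  | zero => simp
  | succ i ih =>
    intro hi
    refine (edist_triangle _ (c i) _).trans ?_
    push_cast
    rw [add_mul, one_mul]
    exact add_le_add (ih (by omega)) (h i (by omega))

/-- The variation of `ξ` along a partial translation is bounded by the energy at the generating
scale, with a constant independent of `ξ`. -/
lemma exists_translation_bound {X : Type*} [EMetricSpace X]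
    (hbg : ∀ r : ℝ≥0∞, r < ⊤ → ∃ M : ℕ, ∀ x : X,
      ({y | edist x y ≤ r}).Finite ∧ ({y | edist x y ≤ r}).ncard ≤ M)
    (R : ℝ≥0∞) (hRtop : R < ⊤)
    (hgen : ∀ r : ℝ≥0∞, r < ⊤ → ∃ n : ℕ, ∀ x y : X, edist x y ≤ r →
      ∃ (k : ℕ) (c : ℕ → X), k ≤ n ∧ c 0 = x ∧ c k = y ∧
        ∀ i < k, edist (c i) (c (i + 1)) ≤ R)
    (N : X → Finset X) (hN : ∀ x y, y ∈ N x ↔ x ≠ y ∧ edist x y ≤ R)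
    (t : X → X) (A B : Set X) (ht : IsPartialTranslation t A B) :
    ∃ K : ℕ, ∀ ξ : X → ℂ, ∑' x : A, ‖ξ (t x) - ξ x‖ₑ ^ 2 ≤ K * energy N ξ := by
  obtain ⟨-, C, hC, htC⟩ := ht
  obtain ⟨n, hn⟩ := hgen C hC
  obtain ⟨M, hM⟩ := hbg (n * R) (ENNReal.mul_lt_top (ENNReal.natCast_lt_top n) hRtop)
  refine ⟨n * n * M, fun ξ => ?_⟩
  refine tsum_translation_le N (fun x => (hM x).1.toFinset) ?_ M n ?_ ξ t A ?_
  · intro x y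
    simp [edist_comm]
  · intro x
    rw [← Set.ncard_eq_toFinset_card _ (hM x).1]
    exact (hM x).2
  · intro x hx
    obtain ⟨k, c, hk, h0, hck, hc⟩ := hn x (t x) (by rw [edist_comm]; exact htC x hx)
    refine ⟨k, c, hk, h0, hck, fun i hi => ?_, fun i hi => ?_⟩
    · simp only [Set.Finite.mem_toFinset, Set.mem_ofPred_eq]
      rw [← h0]
      refine (chain_edist_le R k c hc i hi.le).trans ?_
      gcongr
      omega
    · rw [hN]
      by_cases h : c i = c (i + 1)
      · exact Or.inl h
      · exact Or.inr ⟨h, hc i hi⟩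

/-- Without amenability, some finite family of partial translations moves every unit vector by a
definite amount; this makes `Δ` coercive, hence invertible. -/
lemma amenable_of_not_isUnit {X : Type*} [EMetricSpace X]
    (N : X → Finset X)
    (hbd : ∀ (t : X → X) (A B : Set X), IsPartialTranslation t A B →
      ∃ K : ℕ, ∀ ξ : X → ℂ, ∑' x : A, ‖ξ (t x) - ξ x‖ₑ ^ 2 ≤ K * energy N ξ)
    (Δ : lp (fun _ : X => ℂ) 2 →L[ℂ] lp (fun _ : X => ℂ) 2)
    (hen : ∀ ξ : lp (fun _ : X => ℂ) 2,
      energy N ξ ≠ ∞ ∧ (energy N ξ).toReal = 2 * (inner ℂ (Δ ξ) ξ).re)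
    (hu : ¬ IsUnit Δ) : IsAmenableSpace X := by
  intro ε hε m t A B ht
  by_contra hcon
  push Not at hcon
  choose K hK using fun i => hbd (t i) (A i) (B i) (ht i)
  apply hu
  set L : ℝ := 2 * (∑ i, (K i : ℝ) + 1) with hL
  have hLpos : 0 < L := by positivity
  have hunit : ∀ ξ : lp (fun _ : X => ℂ) 2, ‖ξ‖ = 1 → ε / L ≤ ‖inner ℂ (Δ ξ) ξ‖ := by
    intro ξ hξ
    obtain ⟨i, hi⟩ := hcon ξ hξ
    obtain ⟨hfin, heq⟩ := hen ξ
    rw [tsum_norm_eq_toReal] at hi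
    have h1 := ENNReal.toReal_mono (ENNReal.mul_ne_top (ENNReal.natCast_ne_top (K i)) hfin)
      (hK i ξ)
    rw [ENNReal.toReal_mul, ENNReal.toReal_natCast, heq] at h1
    have h2 : (K i : ℝ) ≤ ∑ i, (K i : ℝ) + 1 :=
      (Finset.single_le_sum (f := fun i => (K i : ℝ)) (fun _ _ => by positivity)
        (Finset.mem_univ i)).trans (by linarith)
    have h3 := Complex.re_le_norm (inner ℂ (Δ ξ) ξ)
    rw [div_le_iff₀ hLpos]
    calc ε ≤ K i * (2 * (inner ℂ (Δ ξ) ξ).re) := hi.trans h1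
      _ ≤ K i * (2 * ‖inner ℂ (Δ ξ) ξ‖) := by gcongr
      _ ≤ (∑ i, (K i : ℝ) + 1) * (2 * ‖inner ℂ (Δ ξ) ξ‖) := by gcongr
      _ = _ := by rw [hL]; ring
  have hc : 0 < ε / L := by positivity
  refine ContinuousLinearMap.isUnit_of_forall_le_norm_inner_map Δ (c := ⟨ε / L, hc.le⟩) hc ?_
  intro ξ
  change ‖ξ‖ ^ 2 * (ε / L) ≤ _
  by_cases h0 : ξ = 0
  · simp [h0]
  have hn : 0 < ‖ξ‖ := norm_pos_iff.2 h0
  have h := hunit (((‖ξ‖⁻¹ : ℝ) : ℂ) • ξ) (by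
    rw [norm_smul, Complex.norm_real, norm_inv, norm_norm, inv_mul_cancel₀ hn.ne'])
  rw [map_smul, inner_smul_left, inner_smul_right, norm_mul, norm_mul, Complex.conj_ofReal,
    Complex.norm_real, norm_inv, norm_norm] at h
  calc ‖ξ‖ ^ 2 * (ε / L) ≤ ‖ξ‖ ^ 2 * (‖ξ‖⁻¹ * (‖ξ‖⁻¹ * ‖inner ℂ (Δ ξ) ξ‖)) := by gcongr
    _ = _ := by field_simp

/-- Almost invariant unit vectors for the partial translations covering the edges violate any
lower bound `‖ξ‖ ≤ L ‖Δ ξ‖`. -/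
lemma not_isUnit_of_amenable {X : Type*} [EMetricSpace X]
    (R : ℝ≥0∞) (hRtop : R < ⊤)
    (N : X → Finset X) (hN : ∀ x y, y ∈ N x ↔ x ≠ y ∧ edist x y ≤ R)
    (M : ℕ) (hM : ∀ x, (N x).card ≤ M)
    (hbd : ∀ (t : X → X) (A B : Set X), IsPartialTranslation t A B →
      ∃ K : ℕ, ∀ ξ : X → ℂ, ∑' x : A, ‖ξ (t x) - ξ x‖ₑ ^ 2 ≤ K * energy N ξ)
    (Δ : lp (fun _ : X => ℂ) 2 →L[ℂ] lp (fun _ : X => ℂ) 2)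
    (hen : ∀ ξ : lp (fun _ : X => ℂ) 2, energy N ξ ≠ ∞)
    (hle : ∀ ξ : lp (fun _ : X => ℂ) 2, ‖Δ ξ‖ₑ ^ 2 ≤ M * energy N ξ)
    (ham : IsAmenableSpace X) : ¬ IsUnit Δ := by
  have hsymm : ∀ x y, y ∈ N x ↔ x ∈ N y := fun x y => by
    rw [hN, hN, edist_comm, ne_comm]
  obtain ⟨t, A, hinj, htN, hcov⟩ := exists_partial_injections N hsymm M hM
  have hpt : ∀ i, IsPartialTranslation (t i) (A i) (t i '' A i) := fun i =>
    ⟨(hinj i).bijOn_image, R, hRtop, fun x hx => by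
      rw [edist_comm]; exact ((hN _ _).1 (htN i x hx)).2⟩
  rintro ⟨u, rfl⟩
  set v : lp (fun _ : X => ℂ) 2 →L[ℂ] lp (fun _ : X => ℂ) 2 := ↑u⁻¹ with hv
  set L : ℝ := ‖v‖ ^ 2 * (M * (M * M)) with hL
  have hL0 : 0 ≤ L := by positivity
  obtain ⟨ξ, hξ, hsmall⟩ := ham (1 / (L + 1)) (by positivity) (M * M) t A _ hpt
  have hE : (energy N ξ).toReal ≤ (M * M) * (1 / (L + 1)) := by
    have hfin : ∀ i ∈ Finset.univ, ∑' x : A i, ‖ξ (t i x) - ξ x‖ₑ ^ 2 ≠ ∞ := by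
      intro i _
      obtain ⟨K, hK⟩ := hbd (t i) (A i) _ (hpt i)
      exact ne_top_of_le_ne_top
        (ENNReal.mul_ne_top (ENNReal.natCast_ne_top K) (hen ξ)) (hK ξ)
    have h := ENNReal.toReal_mono (ENNReal.sum_ne_top.2 hfin) (energy_le_sum N t A hcov ξ)
    rw [ENNReal.toReal_sum hfin] at h
    refine h.trans ((Finset.sum_le_sum (g := fun _ => 1 / (L + 1)) fun i _ => ?_).trans ?_)
    · rw [← tsum_norm_eq_toReal]
      exact (hsmall i).le
    · simp
  have hD : ‖(u : lp (fun _ : X => ℂ) 2 →L[ℂ] lp (fun _ : X => ℂ) 2) ξ‖ ^ 2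
      ≤ M * (energy N ξ).toReal := by
    have h := ENNReal.toReal_mono (ENNReal.mul_ne_top (ENNReal.natCast_ne_top M) (hen ξ)) (hle ξ)
    simpa using h
  have hinv : v ((u : lp (fun _ : X => ℂ) 2 →L[ℂ] lp (fun _ : X => ℂ) 2) ξ) = ξ := by
    rw [← mul_apply_eq_comp, hv, Units.inv_mul]
    rfl
  have h1 : (1 : ℝ) ≤ ‖v‖ * ‖(u : lp (fun _ : X => ℂ) 2 →L[ℂ] lp (fun _ : X => ℂ) 2) ξ‖ := by
    rw [← hξ]
    conv_lhs => rw [← hinv]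
    exact v.le_opNorm _
  have h2 : (1 : ℝ) ≤ L * (1 / (L + 1)) := by
    calc (1 : ℝ) ≤ (‖v‖ * ‖(u : lp (fun _ : X => ℂ) 2 →L[ℂ] lp (fun _ : X => ℂ) 2) ξ‖) ^ 2 :=
          one_le_pow₀ h1
      _ = ‖v‖ ^ 2 * ‖(u : lp (fun _ : X => ℂ) 2 →L[ℂ] lp (fun _ : X => ℂ) 2) ξ‖ ^ 2 := by ring
      _ ≤ ‖v‖ ^ 2 * (M * ((M * M) * (1 / (L + 1)))) := by
          gcongr
          exact hD.trans (by gcongr)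
      _ = _ := by rw [hL]; ring
  rw [mul_one_div, le_div_iff₀ (by positivity)] at h2
  linarith

/-- For a nonempty countable extended metric space `X` with bounded
geometry, with a "generating" scale `R`, the Laplacian `Δ` at scale `R` on `ℓ²(X; ℂ)`
has `0` in its spectrum if and only if `X` is amenable. -/
theorem stmt_9 {X : Type*} [EMetricSpace X] [Countable X] [Nonempty X]
    (hbg : ∀ r : ℝ≥0∞, r < ⊤ → ∃ M : ℕ, ∀ x : X,
      ({y | edist x y ≤ r}).Finite ∧ ({y | edist x y ≤ r}).ncard ≤ M)
    (R : ℝ≥0∞) (hR0 : 0 < R) (hRtop : R < ⊤)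
    (hgen : ∀ r : ℝ≥0∞, r < ⊤ → ∃ n : ℕ, ∀ x y : X, edist x y ≤ r →
      ∃ (k : ℕ) (c : ℕ → X), k ≤ n ∧ c 0 = x ∧ c k = y ∧
        ∀ i < k, edist (c i) (c (i + 1)) ≤ R)
    (E : Set (X × X)) (hE : E = {p : X × X | p.1 ≠ p.2 ∧ edist p.1 p.2 ≤ R})
    (Δ : lp (fun _ : X => ℂ) 2 →L[ℂ] lp (fun _ : X => ℂ) 2)
    (hΔ : ∀ (ξ : lp (fun _ : X => ℂ) 2) (x : X),
      Δ ξ x = (({y | (x, y) ∈ E}).ncard : ℂ) * ξ x - ∑ᶠ y ∈ {y | (x, y) ∈ E}, ξ y) :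
    (0 : ℂ) ∈ spectrum ℂ Δ ↔ IsAmenableSpace X := by
  obtain ⟨M, hM⟩ := hbg R hRtop
  have hsub : ∀ x, {y | (x, y) ∈ E} ⊆ {y | edist x y ≤ R} := by
    intro x y hy
    rw [hE] at hy
    exact hy.2
  have hfin : ∀ x, {y | (x, y) ∈ E}.Finite := fun x => (hM x).1.subset (hsub x)
  set N : X → Finset X := fun x => (hfin x).toFinset with hNdef
  have hN : ∀ x y, y ∈ N x ↔ x ≠ y ∧ edist x y ≤ R := by
    intro x y
    simp [hNdef, hE]
  have hcard : ∀ x, (N x).card ≤ M := by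
    intro x
    rw [hNdef, ← Set.ncard_eq_toFinset_card _ (hfin x)]
    exact (Set.ncard_le_ncard (hsub x) (hM x).1).trans (hM x).2
  have hsymm : ∀ x y, y ∈ N x ↔ x ∈ N y := fun x y => by
    rw [hN, hN, edist_comm, ne_comm]
  have hΔ' : ∀ (ξ : lp (fun _ : X => ℂ) 2) (x : X), Δ ξ x = ∑ y ∈ N x, (ξ x - ξ y) := by
    intro ξ x
    rw [hΔ, finsum_mem_eq_finite_toFinset_sum _ (hfin x), Set.ncard_eq_toFinset_card _ (hfin x),
      Finset.sum_sub_distrib, Finset.sum_const, nsmul_eq_mul]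
  have hbd := exists_translation_bound hbg R hRtop hgen N hN
  have hen := energy_eq_inner N hsymm M hcard Δ hΔ'
  rw [spectrum.zero_mem_iff]
  exact ⟨amenable_of_not_isUnit N hbd Δ hen,
    not_isUnit_of_amenable R hRtop N hN M hcard hbd Δ (fun ξ => (hen ξ).1)
      (enorm_sq_le_energy N M hcard Δ hΔ')⟩
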